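/- For every L_⊳-formula φ: φ ∈ ICK ⊕ ((p ∧ (p ⊳ q)) → q) if and only if φ is valid on every conditional Kripke frame (X, ≤, 𝓡) satisfying: for all worlds x ∈ X and all upsets a, if x ∈ a then x ∈ ↑(R_a[x]). -/

import Mathlib

/-! ## The conditional language `L_⊳` -/

/-- Formulas of the conditional language `L_⊳`, with proposition letters
indexed by the countable set `ℕ`. -/
inductive CForm : Type where
  | var : ℕ → CForm
  | bot : CForm
  | and : CForm → CForm → CForm
  | or : CForm → CForm → CForm
  | imp : CForm → CForm → CForm
  | cond : CForm → CForm → CForm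

/-- `⊤ := ⊥ → ⊥`. -/
def cTop : CForm := CForm.imp CForm.bot CForm.bot

/-- `φ ↔ ψ := (φ → ψ) ∧ (ψ → φ)`. -/
def cIff (φ ψ : CForm) : CForm := CForm.and (CForm.imp φ ψ) (CForm.imp ψ φ)

/-- Uniform substitution of formulas for proposition letters. -/
def psubst (σ : ℕ → CForm) : CForm → CForm
  | CForm.var q => σ q
  | CForm.bot => CForm.bot
  | CForm.and φ ψ => CForm.and (psubst σ φ) (psubst σ ψ)
  | CForm.or φ ψ => CForm.or (psubst σ φ) (psubst σ ψ)
  | CForm.imp φ ψ => CForm.imp (psubst σ φ) (psubst σ ψ)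
  | CForm.cond φ ψ => CForm.cond (psubst σ φ) (psubst σ ψ)

/-- The logic `ICK ⊕ Γ`: the smallest set of `L_⊳`-formulas containing an
axiomatisation of intuitionistic propositional logic, the formulas of `Γ`, the
axioms `(k_c)` and `(n_c)`, closed under uniform substitution, modus ponens and
the two congruence rules. -/
inductive ICK (Γ : Set CForm) : CForm → Prop where
  | prem {φ : CForm} : φ ∈ Γ → ICK Γ φ
  | a1 : ICK Γ (CForm.imp (CForm.and (CForm.var 0) (CForm.var 1)) (CForm.var 0))
  | a2 : ICK Γ (CForm.imp (CForm.and (CForm.var 0) (CForm.var 1)) (CForm.var 1))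
  | a3 : ICK Γ (CForm.imp (CForm.imp (CForm.var 0) (CForm.var 1))
      (CForm.imp (CForm.imp (CForm.var 0) (CForm.var 2))
        (CForm.imp (CForm.var 0) (CForm.and (CForm.var 1) (CForm.var 2)))))
  | a4 : ICK Γ (CForm.imp (CForm.var 0) (CForm.or (CForm.var 0) (CForm.var 1)))
  | a5 : ICK Γ (CForm.imp (CForm.var 1) (CForm.or (CForm.var 0) (CForm.var 1)))
  | a6 : ICK Γ (CForm.imp (CForm.imp (CForm.var 0) (CForm.var 2))
      (CForm.imp (CForm.imp (CForm.var 1) (CForm.var 2))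
        (CForm.imp (CForm.or (CForm.var 0) (CForm.var 1)) (CForm.var 2))))
  | a7 : ICK Γ (CForm.imp CForm.bot (CForm.var 0))
  | a8 : ICK Γ (CForm.imp (CForm.var 0) (CForm.imp (CForm.var 1) (CForm.var 0)))
  | a9 : ICK Γ (CForm.imp
      (CForm.imp (CForm.var 0) (CForm.imp (CForm.var 1) (CForm.var 2)))
      (CForm.imp (CForm.imp (CForm.var 0) (CForm.var 1))
        (CForm.imp (CForm.var 0) (CForm.var 2))))
  | kc : ICK Γ (cIff (CForm.cond (CForm.var 0) (CForm.and (CForm.var 1) (CForm.var 2)))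
      (CForm.and (CForm.cond (CForm.var 0) (CForm.var 1))
        (CForm.cond (CForm.var 0) (CForm.var 2))))
  | nc : ICK Γ (cIff (CForm.cond (CForm.var 0) cTop) cTop)
  | subst {φ : CForm} (σ : ℕ → CForm) : ICK Γ φ → ICK Γ (psubst σ φ)
  | mp {φ ψ : CForm} : ICK Γ (CForm.imp φ ψ) → ICK Γ φ → ICK Γ ψ
  | congL {φ ψ χ : CForm} :
      ICK Γ (cIff φ ψ) → ICK Γ (cIff (CForm.cond φ χ) (CForm.cond ψ χ))
  | congR {φ ψ χ : CForm} :
      ICK Γ (cIff φ ψ) → ICK Γ (cIff (CForm.cond χ φ) (CForm.cond χ ψ))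

/-! ## Conditional Kripke frames and semantics -/

/-- `a` is an upset (upward closed set) w.r.t. the relation `le`. -/
def IsUpset {X : Type} (le : X → X → Prop) (a : Set X) : Prop :=
  ∀ ⦃x y : X⦄, le x y → x ∈ a → y ∈ a

/-- The upward closure `↑s` of a set `s` w.r.t. the relation `le`. -/
def upCl {X : Type} (le : X → X → Prop) (s : Set X) : Set X :=
  {z | ∃ y ∈ s, le y z}

/-- Truth sets of `L_⊳`-formulas, by intuitionistic Kripke semantics for the
propositional connectives, where `x ⊨ φ ⊳ ψ` iff every `y` with
`x R_{V(φ)} y` satisfies `ψ` (here `V(φ)` is the truth set of `φ`). -/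
def csat {X : Type} (le : X → X → Prop) (R : Set X → X → X → Prop)
    (V : ℕ → Set X) : CForm → Set X
  | CForm.var p => V p
  | CForm.bot => ∅
  | CForm.and φ ψ => csat le R V φ ∩ csat le R V ψ
  | CForm.or φ ψ => csat le R V φ ∪ csat le R V ψ
  | CForm.imp φ ψ => {x | ∀ y, le x y → y ∈ csat le R V φ → y ∈ csat le R V ψ}
  | CForm.cond φ ψ => {x | ∀ y, R (csat le R V φ) x y → y ∈ csat le R V ψ}

/-- A conditional Kripke frame: a nonempty preordered set `(X, le)` with a
family of relations `R a` (indexed by the upsets `a`) satisfying the coherence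
condition `(≤ ∘ R_a) ⊆ (R_a ∘ ≤)`. -/
structure CondFrame where
  X : Type
  ne : Nonempty X
  le : X → X → Prop
  le_refl : ∀ x, le x x
  le_trans : ∀ ⦃x y z⦄, le x y → le y z → le x z
  R : Set X → X → X → Prop
  coh : ∀ a : Set X, IsUpset le a →
    ∀ ⦃x y z⦄, le x y → R a y z → ∃ w, R a x w ∧ le w z

/-- Validity on a conditional Kripke frame: truth at every world under every
valuation of the proposition letters by upsets. -/
def CondFrame.valid (F : CondFrame) (φ : CForm) : Prop :=
  ∀ V : ℕ → Set F.X, (∀ p, IsUpset F.le (V p)) → ∀ x, x ∈ csat F.le F.R V φ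

/-! ## Conditional Heyting algebras -/

/-- A conditional Heyting algebra: a Heyting algebra with a binary operation
`cond` (written `⊳` in the paper) preserving finite meets in its second
argument. -/
class CondHeyting (A : Type) extends HeytingAlgebra A where
  cond : A → A → A
  cond_inf : ∀ a b c : A, cond a (b ⊓ c) = cond a b ⊓ cond a c
  cond_top : ∀ a : A, cond a ⊤ = ⊤

/-- Evaluation of an `L_⊳`-formula in a conditional Heyting algebra under an
assignment `σ` of the proposition letters. -/
def evalCHA {A : Type} [CondHeyting A] (σ : ℕ → A) : CForm → A
  | CForm.var p => σ p
  | CForm.bot => ⊥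
  | CForm.and φ ψ => evalCHA σ φ ⊓ evalCHA σ ψ
  | CForm.or φ ψ => evalCHA σ φ ⊔ evalCHA σ ψ
  | CForm.imp φ ψ => evalCHA σ φ ⇨ evalCHA σ ψ
  | CForm.cond φ ψ => CondHeyting.cond (evalCHA σ φ) (evalCHA σ ψ)

/-- A formula is satisfied in a conditional Heyting algebra if it evaluates to
`⊤` under every assignment. -/
def chaSat (A : Type) [CondHeyting A] (φ : CForm) : Prop :=
  ∀ σ : ℕ → A, evalCHA σ φ = ⊤

/-- A prime filter: a proper, nonempty, upward closed subset, closed under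
binary meets, such that `a ⊔ b ∈ x` implies `a ∈ x` or `b ∈ x`. -/
def IsPrimeFilter {A : Type} [Lattice A] (x : Set A) : Prop :=
  x.Nonempty ∧ x ≠ Set.univ ∧
  (∀ ⦃a b : A⦄, a ∈ x → a ≤ b → b ∈ x) ∧
  (∀ ⦃a b : A⦄, a ∈ x → b ∈ x → a ⊓ b ∈ x) ∧
  (∀ ⦃a b : A⦄, a ⊔ b ∈ x → a ∈ x ∨ b ∈ x)

/-! ## General conditional frames -/

/-- A general conditional frame `(X, ≤, 𝓡, A)`. -/
structure GenFrame where
  X : Type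
  le : X → X → Prop
  le_refl : ∀ x, le x x
  le_trans : ∀ ⦃x y z⦄, le x y → le y z → le x z
  le_antisymm : ∀ ⦃x y⦄, le x y → le y x → x = y
  A : Set (Set X)
  upA : ∀ a ∈ A, IsUpset le a
  univ_mem : Set.univ ∈ A
  empty_mem : ∅ ∈ A
  inter_mem : ∀ a ∈ A, ∀ b ∈ A, a ∩ b ∈ A
  union_mem : ∀ a ∈ A, ∀ b ∈ A, a ∪ b ∈ A
  R : Set X → X → X → Prop
  himp_mem : ∀ a ∈ A, ∀ b ∈ A, {x | ∀ y, le x y → y ∈ a → y ∈ b} ∈ A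
  cimp_mem : ∀ a ∈ A, ∀ b ∈ A, {x | ∀ y, R a x y → y ∈ b} ∈ A
  coh : ∀ a ∈ A, ∀ ⦃x y z⦄, le x y → R a y z → ∃ w, R a x w ∧ le w z

/-- The carrier of the complex algebra of a general frame: the admissible
upsets. -/
def GenFrame.AUp (G : GenFrame) : Type := {a : Set G.X // a ∈ G.A}

instance GenFrame.instLatticeAUp (G : GenFrame) : Lattice G.AUp where
  le a b := a.val ⊆ b.val
  le_refl a := subset_rfl
  le_trans a b c h h' := Set.Subset.trans h h'
  le_antisymm a b h h' := Subtype.ext (subset_antisymm h h')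
  sup a b := ⟨a.val ∪ b.val, G.union_mem _ a.2 _ b.2⟩
  le_sup_left a b := Set.subset_union_left
  le_sup_right a b := Set.subset_union_right
  sup_le a b c h h' := Set.union_subset h h'
  inf a b := ⟨a.val ∩ b.val, G.inter_mem _ a.2 _ b.2⟩
  inf_le_left a b := Set.inter_subset_left
  inf_le_right a b := Set.inter_subset_right
  le_inf a b c h h' := Set.subset_inter h h'

instance GenFrame.instHeytingAUp (G : GenFrame) : HeytingAlgebra G.AUp :=
  { GenFrame.instLatticeAUp G with
    top := ⟨Set.univ, G.univ_mem⟩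
    le_top := fun a => Set.subset_univ _
    bot := ⟨∅, G.empty_mem⟩
    bot_le := fun a => Set.empty_subset _
    himp := fun a b => ⟨{x | ∀ y, G.le x y → y ∈ a.val → y ∈ b.val},
      G.himp_mem _ a.2 _ b.2⟩
    compl := fun a => ⟨{x | ∀ y, G.le x y → y ∈ a.val → y ∈ (∅ : Set G.X)},
      G.himp_mem _ a.2 _ G.empty_mem⟩
    le_himp_iff := by
      intro a b c
      show a.val ⊆ {x | ∀ y, G.le x y → y ∈ b.val → y ∈ c.val} ↔
        a.val ∩ b.val ⊆ c.val
      constructor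
      · rintro h x ⟨hxa, hxb⟩
        exact h hxa x (G.le_refl x) hxb
      · intro h x hxa y hle hyb
        exact h ⟨G.upA a.val a.2 hle hxa, hyb⟩
    himp_bot := fun a => rfl }

/-- The complex algebra `AUp(G)` of a general frame `G` is a conditional
Heyting algebra, with `a ⊳ b := {x | R_a[x] ⊆ b}`. -/
instance GenFrame.instCondHeytingAUp (G : GenFrame) : CondHeyting G.AUp where
  cond a b := ⟨{x | ∀ y, G.R a.val x y → y ∈ b.val}, G.cimp_mem _ a.2 _ b.2⟩
  cond_inf a b c := Subtype.ext (Set.ext fun x => by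
    show (∀ y, G.R a.val x y → y ∈ b.val ∩ c.val) ↔
      (∀ y, G.R a.val x y → y ∈ b.val) ∧ (∀ y, G.R a.val x y → y ∈ c.val)
    constructor
    · intro h
      exact ⟨fun y hy => (h y hy).1, fun y hy => (h y hy).2⟩
    · rintro ⟨h1, h2⟩ y hy
      exact ⟨h1 y hy, h2 y hy⟩)
  cond_top a := Subtype.ext (Set.ext fun x => by
    show (∀ y, G.R a.val x y → y ∈ (Set.univ : Set G.X)) ↔
      x ∈ (Set.univ : Set G.X)
    exact ⟨fun _ => trivial, fun _ y _ => trivial⟩)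

/-! ## Conditional Esakia spaces -/

/-- A conditional Esakia space: an Esakia space `(X, le, top)` together with a
family of relations `R a` indexed by the clopen upsets `a`, such that
`{x | R_a[x] ⊆ b}` is clopen for clopen upsets `a, b`, each `R_a[x]` is
closed, and `(≤ ∘ R_a ∘ ≤) = R_a`. -/
structure CondEsakia where
  X : Type
  ne : Nonempty X
  le : X → X → Prop
  le_refl : ∀ x, le x x
  le_trans : ∀ ⦃x y z⦄, le x y → le y z → le x z
  le_antisymm : ∀ ⦃x y⦄, le x y → le y x → x = y
  top : TopologicalSpace X
  compact : @CompactSpace X top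
  sep : ∀ x y : X, ¬ le x y →
    ∃ a : Set X, @IsClopen X top a ∧ IsUpset le a ∧ x ∈ a ∧ y ∉ a
  down_clopen : ∀ a : Set X, @IsClopen X top a →
    @IsClopen X top {x | ∃ y ∈ a, le x y}
  R : Set X → X → X → Prop
  box_clopen : ∀ a b : Set X, @IsClopen X top a → IsUpset le a →
    @IsClopen X top b → IsUpset le b →
    @IsClopen X top {x | ∀ y, R a x y → y ∈ b}
  coh : ∀ a : Set X, @IsClopen X top a → IsUpset le a →
    ∀ x z : X, (∃ x' y', le x x' ∧ R a x' y' ∧ le y' z) ↔ R a x z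
  im_closed : ∀ a : Set X, @IsClopen X top a → IsUpset le a →
    ∀ x : X, @IsClosed X top {y | R a x y}

/-- `a` is a clopen upset of the conditional Esakia space `S`. -/
def CondEsakia.ClopUp (S : CondEsakia) (a : Set S.X) : Prop :=
  @IsClopen S.X S.top a ∧ IsUpset S.le a

/-- Validity on a conditional Esakia space: truth at every world under every
valuation of the proposition letters by clopen upsets. -/
def CondEsakia.valid (S : CondEsakia) (φ : CForm) : Prop :=
  ∀ V : ℕ → Set S.X, (∀ p, S.ClopUp (V p)) → ∀ x, x ∈ csat S.le S.R V φ

/-- The family of relations of the empty fill-in `κ_∅(S)`: it agrees with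
`S.R` on clopen upsets and is empty on all other sets. -/
def CondEsakia.emptyFill (S : CondEsakia) : Set S.X → S.X → S.X → Prop :=
  fun a x y => S.ClopUp a ∧ S.R a x y

/-- Validity on the empty fill-in `κ_∅(S)`, a conditional Kripke frame:
truth at every world under every valuation by (arbitrary) upsets. -/
def CondEsakia.emptyFillValid (S : CondEsakia) (φ : CForm) : Prop :=
  ∀ V : ℕ → Set S.X, (∀ p, IsUpset S.le (V p)) →
    ∀ x, x ∈ csat S.le S.emptyFill V φ

/-! ## The modal language `L_□` -/

/-- Formulas of the modal language `L_□`. -/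
inductive MForm : Type where
  | var : ℕ → MForm
  | bot : MForm
  | and : MForm → MForm → MForm
  | or : MForm → MForm → MForm
  | imp : MForm → MForm → MForm
  | box : MForm → MForm

/-- The translation `(−)^p : L_□ → L_⊳`: it fixes proposition letters, `⊥`,
`∧`, `∨`, `→`, and sends `□ψ` to `p ⊳ ψ^p`. -/
def MForm.transl (p : ℕ) : MForm → CForm
  | MForm.var q => CForm.var q
  | MForm.bot => CForm.bot
  | MForm.and φ ψ => CForm.and (φ.transl p) (ψ.transl p)
  | MForm.or φ ψ => CForm.or (φ.transl p) (ψ.transl p)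
  | MForm.imp φ ψ => CForm.imp (φ.transl p) (ψ.transl p)
  | MForm.box φ => CForm.cond (CForm.var p) (φ.transl p)

/-- The proposition letter `p` occurs (as a subformula) in a modal formula. -/
def MForm.occurs (p : ℕ) : MForm → Prop
  | MForm.var q => p = q
  | MForm.bot => False
  | MForm.and φ ψ => φ.occurs p ∨ ψ.occurs p
  | MForm.or φ ψ => φ.occurs p ∨ ψ.occurs p
  | MForm.imp φ ψ => φ.occurs p ∨ ψ.occurs p
  | MForm.box φ => φ.occurs p

/-- Truth sets of `L_□`-formulas in a modal model, by intuitionistic Kripke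
semantics with `x ⊨ □φ` iff every `y` with `x R y` satisfies `φ`. -/
def msat {X : Type} (le : X → X → Prop) (R : X → X → Prop)
    (V : ℕ → Set X) : MForm → Set X
  | MForm.var p => V p
  | MForm.bot => ∅
  | MForm.and φ ψ => msat le R V φ ∩ msat le R V ψ
  | MForm.or φ ψ => msat le R V φ ∪ msat le R V ψ
  | MForm.imp φ ψ => {x | ∀ y, le x y → y ∈ msat le R V φ → y ∈ msat le R V ψ}
  | MForm.box φ => {x | ∀ y, R x y → y ∈ msat le R V φ}

/-- A modal Esakia space: an Esakia space with a relation `R` such that each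
`R[x]` is closed and `R = (≤ ∘ R ∘ ≤)`. -/
structure ModalEsakia where
  X : Type
  ne : Nonempty X
  le : X → X → Prop
  le_refl : ∀ x, le x x
  le_trans : ∀ ⦃x y z⦄, le x y → le y z → le x z
  le_antisymm : ∀ ⦃x y⦄, le x y → le y x → x = y
  top : TopologicalSpace X
  compact : @CompactSpace X top
  sep : ∀ x y : X, ¬ le x y →
    ∃ a : Set X, @IsClopen X top a ∧ IsUpset le a ∧ x ∈ a ∧ y ∉ a
  down_clopen : ∀ a : Set X, @IsClopen X top a →
    @IsClopen X top {x | ∃ y ∈ a, le x y}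
  R : X → X → Prop
  im_closed : ∀ x : X, @IsClosed X top {y | R x y}
  coh : ∀ x z : X, (∃ x' y', le x x' ∧ R x' y' ∧ le y' z) ↔ R x z

/-- Validity on a modal Esakia space: truth everywhere under every valuation
by clopen upsets. -/
def ModalEsakia.valid (M : ModalEsakia) (φ : MForm) : Prop :=
  ∀ V : ℕ → Set M.X, (∀ p, @IsClopen M.X M.top (V p) ∧ IsUpset M.le (V p)) →
    ∀ x, x ∈ msat M.le M.R V φ

/-- Validity on the underlying modal frame `κ(M)` of a modal Esakia space:
truth everywhere under every valuation by arbitrary upsets. -/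
def ModalEsakia.frameValid (M : ModalEsakia) (φ : MForm) : Prop :=
  ∀ V : ℕ → Set M.X, (∀ p, IsUpset M.le (V p)) → ∀ x, x ∈ msat M.le M.R V φ

/-- An `L_□`-formula is d-persistent if its validity on a modal Esakia space
implies its validity on the underlying modal frame. -/
def DPersistent (φ : MForm) : Prop :=
  ∀ M : ModalEsakia, M.valid φ → M.frameValid φ

/-- The axiom `(mp)  (p ∧ (p ⊳ q)) → q`. -/
def axMp : CForm :=
  CForm.imp (CForm.and (CForm.var 0) (CForm.cond (CForm.var 0) (CForm.var 1)))
    (CForm.var 1)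

/-!
Soundness is an induction on derivations. For completeness, take the prime theories ordered by
inclusion as worlds and let `x R_a y` mean that `φ ⊳ ψ ∈ x` implies `ψ ∈ y` whenever `a` is the
truth set of `φ`. The relations `R_a` with `a` definable give the truth lemma; if `a` is not
definable then `R_a` is total. Hence `x ∈ a` implies `x R_a x` for every `a`: for definable `a` this
is the axiom `(mp)`, and for all other `a` it is trivial.
-/

namespace CondFrame

variable (F : CondFrame) {φ ψ : CForm}

theorem isUpset_csat {V : ℕ → Set F.X} (hV : ∀ p, IsUpset F.le (V p)) (φ : CForm) :
    IsUpset F.le (csat F.le F.R V φ) := by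
  induction φ with
  | var p => exact hV p
  | bot => exact fun _ _ _ h => h
  | and φ ψ ihφ ihψ => exact fun _ _ hxy h => ⟨ihφ hxy h.1, ihψ hxy h.2⟩
  | or φ ψ ihφ ihψ => exact fun _ _ hxy h => h.imp (ihφ hxy) (ihψ hxy)
  | imp φ ψ => exact fun _ _ hxy h z hyz hz => h z (F.le_trans hxy hyz) hz
  | cond φ ψ ihφ ihψ =>
    intro x y hxy h z hyz
    obtain ⟨w, hxw, hwz⟩ := F.coh _ ihφ hxy hyz
    exact ihψ hwz (h w hxw)

theorem valid_imp_iff :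
    F.valid (φ.imp ψ) ↔
      ∀ V : ℕ → Set F.X, (∀ p, IsUpset F.le (V p)) →
        csat F.le F.R V φ ⊆ csat F.le F.R V ψ :=
  ⟨fun h V hV x hx => h V hV x x (F.le_refl x) hx, fun h V hV _ _ _ hy => h V hV hy⟩

theorem valid_cIff_iff :
    F.valid (cIff φ ψ) ↔
      ∀ V : ℕ → Set F.X, (∀ p, IsUpset F.le (V p)) →
        csat F.le F.R V φ = csat F.le F.R V ψ := by
  constructor
  · intro h V hV
    exact Set.Subset.antisymm (F.valid_imp_iff.1 (fun V hV x => (h V hV x).1) V hV)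
      (F.valid_imp_iff.1 (fun V hV x => (h V hV x).2) V hV)
  · intro h V hV x
    exact ⟨F.valid_imp_iff.2 (fun V hV => (h V hV).subset) V hV x,
      F.valid_imp_iff.2 (fun V hV => (h V hV).superset) V hV x⟩

theorem valid_axMp
    (hF : ∀ (x : F.X) (a : Set F.X), IsUpset F.le a → x ∈ a → x ∈ upCl F.le {y | F.R a x y}) :
    F.valid axMp := by
  refine F.valid_imp_iff.2 fun V hV x ⟨hx, hcond⟩ => ?_
  obtain ⟨y, hxy, hyx⟩ := hF x (V 0) (hV 0) hx
  exact hV 1 hyx (hcond y hxy)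

end CondFrame

theorem csat_psubst {X : Type} (le : X → X → Prop) (R : Set X → X → X → Prop) (V : ℕ → Set X)
    (σ : ℕ → CForm) (φ : CForm) :
    csat le R V (psubst σ φ) = csat le R (fun p => csat le R V (σ p)) φ := by
  induction φ with
  | var | bot => rfl
  | and _ _ ihφ ihψ | or _ _ ihφ ihψ | imp _ _ ihφ ihψ | cond _ _ ihφ ihψ =>
    simp only [psubst, csat, ihφ, ihψ]

theorem ICK.sound {Γ : Set CForm} {φ : CForm} (hφ : ICK Γ φ) {F : CondFrame}
    (hΓ : ∀ γ ∈ Γ, F.valid γ) : F.valid φ := by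
  induction hφ with
  | prem h => exact hΓ _ h
  | a1 => exact F.valid_imp_iff.2 fun _ _ _ h => h.1
  | a2 => exact F.valid_imp_iff.2 fun _ _ _ h => h.2
  | a3 =>
    exact F.valid_imp_iff.2 fun _ _ _ hx _ hxy hy z hyz hz =>
      ⟨hx z (F.le_trans hxy hyz) hz, hy z hyz hz⟩
  | a4 => exact F.valid_imp_iff.2 fun _ _ _ h => Or.inl h
  | a5 => exact F.valid_imp_iff.2 fun _ _ _ h => Or.inr h
  | a6 =>
    exact F.valid_imp_iff.2 fun _ _ _ hx _ hxy hy z hyz hz =>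
      hz.elim (hx z (F.le_trans hxy hyz)) (hy z hyz)
  | a7 => exact F.valid_imp_iff.2 fun _ _ => Set.empty_subset _
  | a8 => exact F.valid_imp_iff.2 fun _ hV _ hx _ hxy _ => hV 0 hxy hx
  | a9 =>
    exact F.valid_imp_iff.2 fun _ _ _ hx _ hxy hy z hyz hz =>
      hx z (F.le_trans hxy hyz) hz z (F.le_refl z) (hy z hyz hz)
  | kc => exact F.valid_cIff_iff.2 fun _ _ => Set.ext fun _ => forall₂_and
  | nc =>
    exact F.valid_cIff_iff.2 fun _ _ =>
      Set.ext fun _ => iff_of_true (fun _ _ _ _ h => h) fun _ _ h => h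
  | subst σ _ ih =>
    intro V hV x
    rw [csat_psubst]
    exact ih _ (fun p => F.isUpset_csat hV (σ p)) x
  | mp _ _ ihImp ih => exact fun V hV x => F.valid_imp_iff.1 ihImp V hV (ih V hV x)
  | congL _ ih | congR _ ih =>
    exact F.valid_cIff_iff.2 fun V hV => by simp only [csat, F.valid_cIff_iff.1 ih V hV]

/-- The substitution of `φ`, `ψ`, `χ` for the letters `0`, `1`, `2` in which the axioms of `ICK`
are written; the value at all further letters is irrelevant. -/
def letterSubst (φ ψ χ : CForm) : ℕ → CForm
  | 0 => φ
  | 1 => ψ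
  | _ => χ

/-- A theory of `ICK ⊕ Γ`: a set of formulas containing `ICK ⊕ Γ` and closed under modus ponens
(but not necessarily under substitution). -/
structure IsTheory (Γ T : Set CForm) : Prop where
  mem_of_ICK : ∀ ⦃φ : CForm⦄, ICK Γ φ → φ ∈ T
  mp : ∀ ⦃φ ψ : CForm⦄, φ.imp ψ ∈ T → φ ∈ T → ψ ∈ T

/-- A prime theory of `ICK ⊕ Γ`: a consistent theory with the disjunction property. -/
structure IsPrimeTheory (Γ T : Set CForm) : Prop extends IsTheory Γ T where
  bot_notMem : CForm.bot ∉ T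
  mem_or_mem : ∀ ⦃φ ψ : CForm⦄, φ.or ψ ∈ T → φ ∈ T ∨ ψ ∈ T

theorem isTheory_setOf_ICK (Γ : Set CForm) : IsTheory Γ {φ | ICK Γ φ} :=
  ⟨fun _ h => h, fun _ _ => ICK.mp⟩

namespace IsTheory

variable {Γ T : Set CForm} {φ ψ χ : CForm}

theorem imp_mem_of_mem (hT : IsTheory Γ T) (φ : CForm) (hψ : ψ ∈ T) : φ.imp ψ ∈ T :=
  hT.mp (hT.mem_of_ICK (ICK.a8.subst (letterSubst ψ φ φ))) hψ

theorem imp_mem_of_imp_imp_mem (hT : IsTheory Γ T) (h : φ.imp (ψ.imp χ) ∈ T)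
    (hψ : φ.imp ψ ∈ T) : φ.imp χ ∈ T :=
  hT.mp (hT.mp (hT.mem_of_ICK (ICK.a9.subst (letterSubst φ ψ χ))) h) hψ

theorem imp_self_mem (hT : IsTheory Γ T) (φ : CForm) : φ.imp φ ∈ T :=
  hT.imp_mem_of_imp_imp_mem
    (hT.mem_of_ICK (ICK.a8.subst (letterSubst φ (φ.imp φ) φ)))
    (hT.mem_of_ICK (ICK.a8.subst (letterSubst φ φ φ)))

theorem and_mem_iff (hT : IsTheory Γ T) : φ.and ψ ∈ T ↔ φ ∈ T ∧ ψ ∈ T := by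
  constructor
  · intro h
    exact ⟨hT.mp (hT.mem_of_ICK (ICK.a1.subst (letterSubst φ ψ ψ))) h,
      hT.mp (hT.mem_of_ICK (ICK.a2.subst (letterSubst φ ψ ψ))) h⟩
  · rintro ⟨hφ, hψ⟩
    have h : cTop.imp (φ.and ψ) ∈ T :=
      hT.mp (hT.mp (hT.mem_of_ICK (ICK.a3.subst (letterSubst cTop φ ψ)))
        (hT.imp_mem_of_mem cTop hφ)) (hT.imp_mem_of_mem cTop hψ)
    exact hT.mp h (hT.imp_self_mem CForm.bot)

theorem or_mem_of_left_mem (hT : IsTheory Γ T) (hφ : φ ∈ T) : φ.or ψ ∈ T :=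
  hT.mp (hT.mem_of_ICK (ICK.a4.subst (letterSubst φ ψ ψ))) hφ

theorem or_mem_of_right_mem (hT : IsTheory Γ T) (hψ : ψ ∈ T) : φ.or ψ ∈ T :=
  hT.mp (hT.mem_of_ICK (ICK.a5.subst (letterSubst φ ψ ψ))) hψ

theorem mem_of_or_mem (hT : IsTheory Γ T) (h : φ.or ψ ∈ T) (hφ : φ.imp χ ∈ T)
    (hψ : ψ.imp χ ∈ T) : χ ∈ T :=
  hT.mp (hT.mp (hT.mp (hT.mem_of_ICK (ICK.a6.subst (letterSubst φ ψ χ))) hφ) hψ) h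

theorem mem_of_bot_mem (hT : IsTheory Γ T) (h : CForm.bot ∈ T) : φ ∈ T :=
  hT.mp (hT.mem_of_ICK (ICK.a7.subst (letterSubst φ φ φ))) h

theorem mem_iff_of_cIff (hT : IsTheory Γ T) (h : ICK Γ (cIff φ ψ)) : φ ∈ T ↔ ψ ∈ T := by
  obtain ⟨hφψ, hψφ⟩ := hT.and_mem_iff.1 (hT.mem_of_ICK h)
  exact ⟨hT.mp hφψ, hT.mp hψφ⟩

/-- The least theory containing `T` and `φ`, in the form given by the deduction theorem. -/
def adjoin (T : Set CForm) (φ : CForm) : Set CForm := {ψ | φ.imp ψ ∈ T}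

theorem isTheory_adjoin (hT : IsTheory Γ T) (φ : CForm) : IsTheory Γ (adjoin T φ) :=
  ⟨fun _ h => hT.imp_mem_of_mem φ (hT.mem_of_ICK h), fun _ _ => hT.imp_mem_of_imp_imp_mem⟩

theorem subset_adjoin (hT : IsTheory Γ T) (φ : CForm) : T ⊆ adjoin T φ :=
  fun _ => hT.imp_mem_of_mem φ

theorem mem_adjoin_self (hT : IsTheory Γ T) (φ : CForm) : φ ∈ adjoin T φ :=
  hT.imp_self_mem φ

theorem cond_and_mem_iff (hT : IsTheory Γ T) :
    φ.cond (ψ.and χ) ∈ T ↔ φ.cond ψ ∈ T ∧ φ.cond χ ∈ T := by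
  rw [← hT.and_mem_iff]
  exact hT.mem_iff_of_cIff (ICK.kc.subst (letterSubst φ ψ χ))

theorem cond_mem_mono (hT : IsTheory Γ T) (h : ICK Γ (ψ.imp χ)) (hψ : φ.cond ψ ∈ T) :
    φ.cond χ ∈ T := by
  have hL := isTheory_setOf_ICK Γ
  have hψ_and : ICK Γ (ψ.imp (ψ.and χ)) :=
    (hL.isTheory_adjoin ψ).and_mem_iff.2 ⟨hL.mem_adjoin_self ψ, h⟩
  have hiff : ICK Γ (cIff ψ (ψ.and χ)) :=
    hL.and_mem_iff.2 ⟨hψ_and, ICK.a1.subst (letterSubst ψ χ χ)⟩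
  exact (hT.cond_and_mem_iff.1 ((hT.mem_iff_of_cIff hiff.congR).1 hψ)).2

theorem isTheory_setOf_cond_mem (hT : IsTheory Γ T) (φ : CForm) :
    IsTheory Γ {ψ | φ.cond ψ ∈ T} where
  mem_of_ICK ψ hψ := by
    have hTop : φ.cond cTop ∈ T :=
      (hT.mem_iff_of_cIff (ICK.nc.subst (letterSubst φ φ φ))).2 (hT.imp_self_mem CForm.bot)
    exact hT.cond_mem_mono ((isTheory_setOf_ICK Γ).imp_mem_of_mem cTop hψ) hTop
  mp ψ χ hImp hψ := by
    have hL := isTheory_setOf_ICK Γ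
    have hAdj := hL.isTheory_adjoin ((ψ.imp χ).and ψ)
    have hmp : ICK Γ (((ψ.imp χ).and ψ).imp χ) := by
      obtain ⟨h₁, h₂⟩ := hAdj.and_mem_iff.1 (hL.mem_adjoin_self _)
      exact hAdj.mp h₁ h₂
    exact hT.cond_mem_mono hmp (hT.cond_and_mem_iff.2 ⟨hImp, hψ⟩)

theorem sUnion_of_isChain {c : Set (Set CForm)} (hc : ∀ S ∈ c, IsTheory Γ S)
    (hchain : IsChain (· ⊆ ·) c) (hne : c.Nonempty) : IsTheory Γ (⋃₀ c) where
  mem_of_ICK φ hφ := by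
    obtain ⟨S, hS⟩ := hne
    exact ⟨S, hS, (hc S hS).mem_of_ICK hφ⟩
  mp := by
    rintro φ ψ ⟨S, hS, hImp⟩ ⟨S', hS', hφ⟩
    obtain ⟨U, hU, hSU, hSU'⟩ := hchain.directedOn S hS S' hS'
    exact ⟨U, hU, (hc U hU).mp (hSU hImp) (hSU' hφ)⟩

theorem exists_maximal_notMem (hT : IsTheory Γ T) (hφ : φ ∉ T) :
    ∃ M, T ⊆ M ∧ Maximal (fun S => IsTheory Γ S ∧ φ ∉ S) M := by
  refine zorn_subset_nonempty {S | IsTheory Γ S ∧ φ ∉ S} (fun c hc hchain hne => ?_) T ⟨hT, hφ⟩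
  refine ⟨⋃₀ c, ⟨sUnion_of_isChain (fun S hS => (hc hS).1) hchain hne, ?_⟩,
    fun S => Set.subset_sUnion_of_mem⟩
  rintro ⟨S, hS, hφS⟩
  exact (hc hS).2 hφS

theorem isPrimeTheory_of_maximal_notMem {M : Set CForm}
    (hM : Maximal (fun S => IsTheory Γ S ∧ φ ∉ S) M) : IsPrimeTheory Γ M := by
  obtain ⟨hTh, hφ⟩ := hM.prop
  have imp_mem {ψ : CForm} (hψ : ψ ∉ M) : ψ.imp φ ∈ M := by
    by_contra hImp
    exact hψ (hM.le_of_ge ⟨hTh.isTheory_adjoin ψ, hImp⟩ (hTh.subset_adjoin ψ)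
      (hTh.mem_adjoin_self ψ))
  refine ⟨hTh, fun hbot => hφ (hTh.mem_of_bot_mem hbot), fun ψ χ hor => ?_⟩
  by_contra! h
  exact hφ (hTh.mem_of_or_mem hor (imp_mem h.1) (imp_mem h.2))

end IsTheory

/-- The prime theories of `ICK ⊕ Γ`, the worlds of the canonical frame, ordered by inclusion. -/
abbrev PrimeTheory (Γ : Set CForm) : Type := {T : Set CForm // IsPrimeTheory Γ T}

theorem IsTheory.mem_iff_forall_primeTheory {Γ T : Set CForm} {φ : CForm} (hT : IsTheory Γ T) :
    φ ∈ T ↔ ∀ x : PrimeTheory Γ, T ⊆ x.1 → φ ∈ x.1 := by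
  refine ⟨fun hφ x hx => hx hφ, fun h => ?_⟩
  by_contra hφ
  obtain ⟨M, hTM, hM⟩ := hT.exists_maximal_notMem hφ
  exact hM.prop.2 (h ⟨M, isPrimeTheory_of_maximal_notMem hM⟩ hTM)

namespace PrimeTheory

variable {Γ : Set CForm} {φ ψ : CForm}

theorem or_mem_iff (x : PrimeTheory Γ) : φ.or ψ ∈ x.1 ↔ φ ∈ x.1 ∨ ψ ∈ x.1 :=
  ⟨fun h => x.2.mem_or_mem h, fun h => h.elim x.2.or_mem_of_left_mem x.2.or_mem_of_right_mem⟩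

theorem imp_mem_iff (x : PrimeTheory Γ) :
    φ.imp ψ ∈ x.1 ↔ ∀ y, x ≤ y → φ ∈ y.1 → ψ ∈ y.1 := by
  refine ⟨fun h y hxy hφ => y.2.mp (hxy h) hφ, fun h => ?_⟩
  refine (x.2.isTheory_adjoin φ).mem_iff_forall_primeTheory.2 fun y hy => ?_
  exact h y ((x.2.subset_adjoin φ).trans hy) (hy (x.2.mem_adjoin_self φ))

/-- The set of prime theories containing `φ`. -/
def truthSet (Γ : Set CForm) (φ : CForm) : Set (PrimeTheory Γ) := {x | φ ∈ x.1}

theorem isUpset_truthSet (φ : CForm) : IsUpset (· ≤ ·) (truthSet Γ φ) :=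
  fun _ _ hxy hφ => hxy hφ

theorem ICK_imp_of_truthSet_subset (h : truthSet Γ φ ⊆ truthSet Γ ψ) : ICK Γ (φ.imp ψ) := by
  have hL := isTheory_setOf_ICK Γ
  exact (hL.isTheory_adjoin φ).mem_iff_forall_primeTheory.2 fun _ hx =>
    h (hx (hL.mem_adjoin_self φ))

theorem ICK_cIff_of_truthSet_eq (h : truthSet Γ φ = truthSet Γ ψ) : ICK Γ (cIff φ ψ) :=
  (isTheory_setOf_ICK Γ).and_mem_iff.2
    ⟨ICK_imp_of_truthSet_subset h.subset, ICK_imp_of_truthSet_subset h.superset⟩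

/-- The canonical relations. If `a` is not a truth set then `canonicalRel a` is the total
relation. -/
def canonicalRel (a : Set (PrimeTheory Γ)) (x y : PrimeTheory Γ) : Prop :=
  ∀ φ, truthSet Γ φ = a → ∀ ψ, φ.cond ψ ∈ x.1 → ψ ∈ y.1

theorem canonicalRel_truthSet_iff {x y : PrimeTheory Γ} :
    canonicalRel (truthSet Γ φ) x y ↔ {ψ | φ.cond ψ ∈ x.1} ⊆ y.1 := by
  refine ⟨fun h => h φ rfl, fun h χ hχ ψ hψ => h ?_⟩
  exact (x.2.mem_iff_of_cIff (ICK_cIff_of_truthSet_eq hχ).congL).1 hψ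

theorem cond_mem_iff (x : PrimeTheory Γ) :
    φ.cond ψ ∈ x.1 ↔ ∀ y, canonicalRel (truthSet Γ φ) x y → ψ ∈ y.1 := by
  simp only [canonicalRel_truthSet_iff]
  exact (x.2.isTheory_setOf_cond_mem φ).mem_iff_forall_primeTheory

theorem canonicalRel_of_le {a : Set (PrimeTheory Γ)} {x y z : PrimeTheory Γ} (hxy : x ≤ y)
    (hyz : canonicalRel a y z) : canonicalRel a x z :=
  fun φ hφ ψ hψ => hyz φ hφ ψ (hxy hψ)

theorem canonicalRel_self (hΓ : ICK Γ axMp) {a : Set (PrimeTheory Γ)} {x : PrimeTheory Γ}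
    (hx : x ∈ a) : canonicalRel a x x := by
  rintro φ rfl ψ hψ
  have hmp : ICK Γ ((φ.and (φ.cond ψ)).imp ψ) := hΓ.subst (letterSubst φ ψ ψ)
  exact x.2.mp (x.2.mem_of_ICK hmp) (x.2.and_mem_iff.2 ⟨hx, hψ⟩)

theorem csat_canonicalRel_eq_truthSet (φ : CForm) :
    csat (· ≤ ·) canonicalRel (fun p => truthSet Γ (CForm.var p)) φ = truthSet Γ φ := by
  induction φ with
  | var p => rfl
  | bot => exact (Set.eq_empty_of_forall_notMem fun x => x.2.bot_notMem).symm
  | and φ ψ ihφ ihψ =>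
    simp only [csat, ihφ, ihψ]
    exact Set.ext fun x => x.2.and_mem_iff.symm
  | or φ ψ ihφ ihψ =>
    simp only [csat, ihφ, ihψ]
    exact Set.ext fun x => x.or_mem_iff.symm
  | imp φ ψ ihφ ihψ =>
    simp only [csat, ihφ, ihψ]
    exact Set.ext fun x => x.imp_mem_iff.symm
  | cond φ ψ ihφ ihψ =>
    simp only [csat, ihφ, ihψ]
    exact Set.ext fun x => x.cond_mem_iff.symm

/-- The canonical frame of `ICK ⊕ Γ`, which exists as soon as `ICK ⊕ Γ` has a prime theory. -/
def canonicalFrame (Γ : Set CForm) [Nonempty (PrimeTheory Γ)] : CondFrame where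
  X := PrimeTheory Γ
  ne := inferInstance
  le := (· ≤ ·)
  le_refl := le_refl
  le_trans _ _ _ := le_trans
  R := canonicalRel
  coh _ _ _ _ z hxy hyz := ⟨z, canonicalRel_of_le hxy hyz, le_rfl⟩

theorem mem_upCl_canonicalFrame [Nonempty (PrimeTheory Γ)] (hΓ : ICK Γ axMp)
    {x : (canonicalFrame Γ).X} {a : Set (canonicalFrame Γ).X} (hx : x ∈ a) :
    x ∈ upCl (canonicalFrame Γ).le {y | (canonicalFrame Γ).R a x y} :=
  ⟨x, canonicalRel_self hΓ hx, (canonicalFrame Γ).le_refl x⟩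

theorem ICK_of_valid_canonicalFrame
    (h : ∀ _ : Nonempty (PrimeTheory Γ), (canonicalFrame Γ).valid φ) : ICK Γ φ := by
  refine (isTheory_setOf_ICK Γ).mem_iff_forall_primeTheory.2 fun x _ => ?_
  have hx := h ⟨x⟩ (fun p => truthSet Γ (CForm.var p)) (fun p => isUpset_truthSet _) x
  exact (csat_canonicalRel_eq_truthSet φ).subset hx

end PrimeTheory

/-- `ICK ⊕ ((p ∧ (p ⊳ q)) → q)` is sound and complete with
respect to conditional Kripke frames satisfying: for all worlds `x` and upsets
`a`, if `x ∈ a` then `x ∈ ↑(R_a[x])`. -/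
theorem mp_completeness (φ : CForm) :
    ICK {axMp} φ ↔
      ∀ F : CondFrame,
        (∀ (x : F.X) (a : Set F.X), IsUpset F.le a →
          x ∈ a → x ∈ upCl F.le {y | F.R a x y}) →
        F.valid φ := by
  constructor
  · intro hφ F hF
    refine hφ.sound fun γ hγ => ?_
    rw [Set.mem_singleton_iff.1 hγ]
    exact F.valid_axMp hF
  · intro h
    refine PrimeTheory.ICK_of_valid_canonicalFrame fun _ => h _ fun x a _ hx => ?_
    exact PrimeTheory.mem_upCl_canonicalFrame (ICK.prem (Set.mem_singleton axMp)) hx
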